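/- Let (Λ, Λ') be a pair of g-fusion Bessel sequences in H with frame operator S_{ΛΛ'} and (Γ, Γ') a pair of g-fusion Bessel sequences in K with frame operator S_{ΓΓ'}. Then the frame operator S of the pair of tensor product g-fusion Bessel sequences (Λ ⊗ Γ, Λ' ⊗ Γ') satisfies S = S_{ΛΛ'} ⊗ S_{ΓΓ'}. -/

import Mathlib

noncomputable section

open Submodule ContinuousLinearMap

local notation "⟪" x ", " y "⟫" => @inner ℂ _ _ x y

/-- An abstract realization of the Hilbert-space tensor product of `H` and `K`:
a map `tmul : H → K → E` whose inner products multiply and whose elementary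
tensors have dense span. -/
structure HilbertTensor (H K E : Type*) [NormedAddCommGroup H] [InnerProductSpace ℂ H]
    [NormedAddCommGroup K] [InnerProductSpace ℂ K]
    [NormedAddCommGroup E] [InnerProductSpace ℂ E] where
  tmul : H → K → E
  inner_tmul : ∀ (f f' : H) (g g' : K),
    ⟪tmul f g, tmul f' g'⟫ = ⟪f, f'⟫ * ⟪g, g'⟫
  dense_span : Dense (Submodule.span ℂ (Set.range fun p : H × K => tmul p.1 p.2) : Set E)

variable {H K E H' K' E' : Type*}
variable [NormedAddCommGroup H] [InnerProductSpace ℂ H]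
variable [NormedAddCommGroup K] [InnerProductSpace ℂ K]
variable [NormedAddCommGroup E] [InnerProductSpace ℂ E]
variable [NormedAddCommGroup H'] [InnerProductSpace ℂ H']
variable [NormedAddCommGroup K'] [InnerProductSpace ℂ K']
variable [NormedAddCommGroup E'] [InnerProductSpace ℂ E']

/-- The orthogonal projection onto a (closed) subspace, as an operator `H →L[ℂ] H`. -/
def projL (V : Submodule ℂ H) [HasOrthogonalProjection V] : H →L[ℂ] H :=
  V.subtypeL.comp (orthogonalProjection V)

/-- `R` is the tensor product operator `Q ⊗ T`, i.e. it is determined on elementary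
tensors by `(Q ⊗ T)(f ⊗ g) = Qf ⊗ Tg`. -/
def IsTensorOp (tp : HilbertTensor H K E) (tp' : HilbertTensor H' K' E')
    (Q : H →L[ℂ] H') (T : K →L[ℂ] K') (R : E →L[ℂ] E') : Prop :=
  ∀ (f : H) (g : K), R (tp.tmul f g) = tp'.tmul (Q f) (T g)

/-- The tensor product `V ⊗ W` of subspaces: the closure of the span of elementary
tensors of elements of `V` and `W`. -/
def tsub (tp : HilbertTensor H K E) (V : Submodule ℂ H) (W : Submodule ℂ K) : Submodule ℂ E :=
  (Submodule.span ℂ {x : E | ∃ f ∈ V, ∃ g ∈ W, x = tp.tmul f g}).topologicalClosure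

/-- `{(V i, Λ i, v i)}` is a g-fusion Bessel sequence in `H` with bound `B`. -/
def IsGFusionBessel {ι : Type*} {Hi : ι → Type*}
    [∀ i, NormedAddCommGroup (Hi i)] [∀ i, InnerProductSpace ℂ (Hi i)]
    (V : ι → Submodule ℂ H) [∀ i, HasOrthogonalProjection (V i)]
    (Λ : ∀ i, H →L[ℂ] Hi i) (v : ι → ℝ) (B : ℝ) : Prop :=
  (∀ i, 0 < v i) ∧ 0 < B ∧
    ∀ f : H, ∑' i, (v i) ^ 2 * ‖Λ i (projL (V i) f)‖ ^ 2 ≤ B * ‖f‖ ^ 2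

/-- `{(V i, Λ i, v i)}` is a g-fusion frame for `H` with bounds `A ≤ B`. -/
def IsGFusionFrame {ι : Type*} {Hi : ι → Type*}
    [∀ i, NormedAddCommGroup (Hi i)] [∀ i, InnerProductSpace ℂ (Hi i)]
    (V : ι → Submodule ℂ H) [∀ i, HasOrthogonalProjection (V i)]
    (Λ : ∀ i, H →L[ℂ] Hi i) (v : ι → ℝ) (A B : ℝ) : Prop :=
  (∀ i, 0 < v i) ∧ 0 < A ∧ A ≤ B ∧
    ∀ f : H, A * ‖f‖ ^ 2 ≤ ∑' i, (v i) ^ 2 * ‖Λ i (projL (V i) f)‖ ^ 2 ∧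
      ∑' i, (v i) ^ 2 * ‖Λ i (projL (V i) f)‖ ^ 2 ≤ B * ‖f‖ ^ 2

/-!
On an elementary tensor `f ⊗ g` the theorem is the identity
`∑ i, ∑ j, x i ⊗ y j = (∑ i, x i) ⊗ (∑ j, y j)`, where `x i` and `y j` are the terms of the two
frame operator series at `f` and `g`. These series converge unconditionally, but need not converge
absolutely, so the unconditional convergence of the double series has to be proved. For finite sets
of indices, the norm of `∑ (i, j) ∈ F, x i ⊗ y j` is at most a constant times the product of the
largest norms of a subsum of `x` and of a subsum of `y`: collecting the terms with the same `i`
turns this into the little Grothendieck inequality, which follows from Khintchine's inequality for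
random signs.
-/

open scoped BigOperators

section SubsetSums

theorem sum_abs_le_two_mul {ι : Type*} {s : Finset ι} {r : ι → ℝ} {D : ℝ}
    (h : ∀ t ⊆ s, |∑ i ∈ t, r i| ≤ D) : ∑ i ∈ s, |r i| ≤ 2 * D := by
  classical
  have hpos : ∑ i ∈ s with 0 ≤ r i, |r i| ≤ D := by
    rw [Finset.sum_congr rfl fun i hi => abs_of_nonneg (Finset.mem_filter.1 hi).2]
    exact (le_abs_self _).trans (h _ (Finset.filter_subset _ s))
  have hneg : ∑ i ∈ s with ¬ 0 ≤ r i, |r i| ≤ D := by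
    rw [Finset.sum_congr rfl fun i hi => abs_of_neg (not_le.1 (Finset.mem_filter.1 hi).2),
      Finset.sum_neg_distrib]
    exact (neg_le_abs _).trans (h _ (Finset.filter_subset _ s))
  rw [← Finset.sum_filter_add_sum_filter_not s (fun i => 0 ≤ r i)]
  linarith

theorem sum_norm_le_four_mul {𝕜 ι : Type*} [RCLike 𝕜] {s : Finset ι} {z : ι → 𝕜} {D : ℝ}
    (h : ∀ t ⊆ s, ‖∑ i ∈ t, z i‖ ≤ D) : ∑ i ∈ s, ‖z i‖ ≤ 4 * D := by
  have hre : ∑ i ∈ s, |RCLike.re (z i)| ≤ 2 * D := sum_abs_le_two_mul fun t ht => by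
    rw [← map_sum]
    exact (RCLike.abs_re_le_norm _).trans (h t ht)
  have him : ∑ i ∈ s, |RCLike.im (z i)| ≤ 2 * D := sum_abs_le_two_mul fun t ht => by
    rw [← map_sum]
    exact (RCLike.abs_im_le_norm _).trans (h t ht)
  have norm_le (w : 𝕜) : ‖w‖ ≤ |RCLike.re w| + |RCLike.im w| := by
    rw [← sq_le_sq₀ (norm_nonneg w) (by positivity), RCLike.norm_sq_eq_def, add_sq, sq_abs, sq_abs]
    have : 0 ≤ 2 * |RCLike.re w| * |RCLike.im w| := by positivity
    linarith
  calc ∑ i ∈ s, ‖z i‖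
    _ ≤ ∑ i ∈ s, (|RCLike.re (z i)| + |RCLike.im (z i)|) :=
        Finset.sum_le_sum fun i _ => norm_le (z i)
    _ ≤ 4 * D := by
        rw [Finset.sum_add_distrib]
        linarith

theorem sum_norm_inner_le {𝕜 X ι : Type*} [RCLike 𝕜] [SeminormedAddCommGroup X]
    [InnerProductSpace 𝕜 X] {s : Finset ι} {x : ι → X} {D : ℝ}
    (h : ∀ t ⊆ s, ‖∑ i ∈ t, x i‖ ≤ D) (y : X) :
    ∑ i ∈ s, ‖inner 𝕜 (x i) y‖ ≤ 4 * D * ‖y‖ := by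
  rw [mul_assoc]
  refine sum_norm_le_four_mul fun t ht => ?_
  rw [← sum_inner]
  exact (norm_inner_le_norm _ _).trans (mul_le_mul_of_nonneg_right (h t ht) (norm_nonneg _))

theorem exists_norm_sum_le_of_summable {ι X : Type*} [SeminormedAddCommGroup X] {y : ι → X}
    (hy : Summable y) : ∃ M > 0, ∀ t : Finset ι, ‖∑ i ∈ t, y i‖ ≤ M := by
  classical
  obtain ⟨s, hs⟩ := cauchySeq_finset_iff_vanishing_norm.1 hy.hasSum.cauchySeq 1 one_pos
  refine ⟨∑ i ∈ s, ‖y i‖ + 1, by positivity, fun t => ?_⟩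
  calc ‖∑ i ∈ t, y i‖ = ‖∑ i ∈ t ∩ s, y i + ∑ i ∈ t \ s, y i‖ := by
        rw [Finset.sum_inter_add_sum_sdiff]
    _ ≤ ∑ i ∈ t ∩ s, ‖y i‖ + ‖∑ i ∈ t \ s, y i‖ :=
        (norm_add_le _ _).trans (add_le_add_left (norm_sum_le _ _) _)
    _ ≤ ∑ i ∈ s, ‖y i‖ + 1 := by
        gcongr
        · exact Finset.inter_subset_right
        · exact (hs _ Finset.sdiff_disjoint).le

end SubsetSums

section RandomSigns

variable {ι : Type*} [Fintype ι] [DecidableEq ι]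

theorem expect_signs_insert {X : Type*} [AddCommGroup X] {s : Finset ι} {a : ι} (ha : a ∉ s)
    (u : ι → X) (φ : X → ℝ) :
    𝔼 ε : ι → ℤˣ, φ (∑ k ∈ insert a s, ε k • u k) =
      𝔼 ε : ι → ℤˣ, (φ (∑ k ∈ s, ε k • u k + u a) + φ (∑ k ∈ s, ε k • u k - u a)) / 2 := by
  let flip : (ι → ℤˣ) ≃ (ι → ℤˣ) := Equiv.mulRight (Pi.mulSingle a (-1))
  have flip_sum (ε : ι → ℤˣ) : ∑ k ∈ s, flip ε k • u k = ∑ k ∈ s, ε k • u k :=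
    Finset.sum_congr rfl fun k hk => by
      simp [flip, Pi.mulSingle_eq_of_ne (ne_of_mem_of_not_mem hk ha)]
  have flip_apply_self (ε : ι → ℤˣ) : flip ε a = -ε a := by simp [flip]
  have average_flip : 𝔼 ε : ι → ℤˣ, φ (∑ k ∈ insert a s, ε k • u k) =
      𝔼 ε : ι → ℤˣ, φ (∑ k ∈ insert a s, flip ε k • u k) :=
    (Fintype.expect_equiv flip _ _ fun _ => rfl).symm
  have double : 2 * 𝔼 ε : ι → ℤˣ, φ (∑ k ∈ insert a s, ε k • u k) =
      𝔼 ε : ι → ℤˣ, (φ (∑ k ∈ s, ε k • u k + u a) + φ (∑ k ∈ s, ε k • u k - u a)) := by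
    rw [two_mul]
    nth_rw 2 [average_flip]
    rw [← Finset.expect_add_distrib]
    refine Finset.expect_congr rfl fun ε _ => ?_
    rw [Finset.sum_insert ha, Finset.sum_insert ha, flip_sum, flip_apply_self]
    rcases Int.units_eq_one_or (ε a) with hε | hε <;>
      simp [hε, sub_eq_neg_add, add_comm]
  rw [← Finset.expect_div, ← double, mul_div_cancel_left₀ _ two_ne_zero]

variable (𝕜 : Type*) {X : Type*} [RCLike 𝕜] [SeminormedAddCommGroup X] [InnerProductSpace 𝕜 X]

include 𝕜 in
theorem expect_norm_signs_sq (s : Finset ι) (u : ι → X) :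
    𝔼 ε : ι → ℤˣ, ‖∑ k ∈ s, ε k • u k‖ ^ 2 = ∑ k ∈ s, ‖u k‖ ^ 2 := by
  induction s using Finset.induction_on with
  | empty => simp
  | insert a s ha ih =>
    have parallelogram (y : X) : (‖y + u a‖ ^ 2 + ‖y - u a‖ ^ 2) / 2 = ‖y‖ ^ 2 + ‖u a‖ ^ 2 := by
      linarith [parallelogram_law_with_norm 𝕜 y (u a)]
    rw [expect_signs_insert ha u fun y => ‖y‖ ^ 2, Finset.sum_insert ha]
    simp only [parallelogram, Finset.expect_add_distrib, ih, Fintype.expect_const]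
    exact add_comm _ _

include 𝕜 in
theorem norm_add_pow_four_add_norm_sub_pow_four_le (x y : X) :
    ‖x + y‖ ^ 4 + ‖x - y‖ ^ 4 ≤ 2 * (‖x‖ ^ 4 + 6 * ‖y‖ ^ 2 * ‖x‖ ^ 2 + ‖y‖ ^ 4) := by
  have hadd : ‖x + y‖ ^ 4 = (‖x‖ ^ 2 + 2 * RCLike.re (inner 𝕜 x y) + ‖y‖ ^ 2) ^ 2 := by
    rw [← norm_add_sq]
    ring
  have hsub : ‖x - y‖ ^ 4 = (‖x‖ ^ 2 - 2 * RCLike.re (inner 𝕜 x y) + ‖y‖ ^ 2) ^ 2 := by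
    rw [← norm_sub_sq]
    ring
  have cauchy_schwarz : RCLike.re (inner 𝕜 x y) ^ 2 ≤ (‖x‖ * ‖y‖) ^ 2 :=
    have abs_re_le := (RCLike.abs_re_le_norm (inner 𝕜 x y)).trans (norm_inner_le_norm x y)
    sq_le_sq' (abs_le.1 abs_re_le).1 (abs_le.1 abs_re_le).2
  rw [hadd, hsub]
  linarith

include 𝕜 in
theorem expect_norm_signs_pow_four_le (s : Finset ι) (u : ι → X) :
    𝔼 ε : ι → ℤˣ, ‖∑ k ∈ s, ε k • u k‖ ^ 4 ≤ 3 * (∑ k ∈ s, ‖u k‖ ^ 2) ^ 2 := by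
  induction s using Finset.induction_on with
  | empty => simp
  | insert a s ha ih =>
    rw [expect_signs_insert ha u fun y => ‖y‖ ^ 4, Finset.sum_insert ha]
    set σ := ∑ k ∈ s, ‖u k‖ ^ 2 with hσ
    calc 𝔼 ε : ι → ℤˣ, (‖∑ k ∈ s, ε k • u k + u a‖ ^ 4 + ‖∑ k ∈ s, ε k • u k - u a‖ ^ 4) / 2
      _ ≤ 𝔼 ε : ι → ℤˣ, (‖∑ k ∈ s, ε k • u k‖ ^ 4
            + 6 * ‖u a‖ ^ 2 * ‖∑ k ∈ s, ε k • u k‖ ^ 2 + ‖u a‖ ^ 4) :=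
          Finset.expect_le_expect fun ε _ => by
            linarith [norm_add_pow_four_add_norm_sub_pow_four_le 𝕜 (∑ k ∈ s, ε k • u k) (u a)]
      _ = 𝔼 ε : ι → ℤˣ, ‖∑ k ∈ s, ε k • u k‖ ^ 4 + 6 * ‖u a‖ ^ 2 * σ + ‖u a‖ ^ 4 := by
          simp only [Finset.expect_add_distrib, ← Finset.mul_expect, Fintype.expect_const,
            expect_norm_signs_sq 𝕜, hσ]
      _ ≤ 3 * (‖u a‖ ^ 2 + σ) ^ 2 := by nlinarith [sq_nonneg (‖u a‖ ^ 2)]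

include 𝕜 in
theorem expect_norm_signs_le (s : Finset ι) (u : ι → X) :
    𝔼 ε : ι → ℤˣ, ‖∑ k ∈ s, ε k • u k‖ ≤ √(∑ k ∈ s, ‖u k‖ ^ 2) := by
  refine Real.le_sqrt_of_sq_le ?_
  simpa only [one_mul, mul_one, one_pow, Fintype.expect_const, expect_norm_signs_sq 𝕜] using
    Finset.expect_mul_sq_le_sq_mul_sq Finset.univ
      (fun ε : ι → ℤˣ => ‖∑ k ∈ s, ε k • u k‖) fun _ => 1

-- The quartic moment controls the first one from below because `t (t - 2σ)² (t + 4σ) ≥ 0`.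
include 𝕜 in
theorem khintchine_inequality (s : Finset ι) (u : ι → X) :
    √(∑ k ∈ s, ‖u k‖ ^ 2) ≤ 2 * 𝔼 ε : ι → ℤˣ, ‖∑ k ∈ s, ε k • u k‖ := by
  set σ := √(∑ k ∈ s, ‖u k‖ ^ 2)
  have sum_eq : ∑ k ∈ s, ‖u k‖ ^ 2 = σ ^ 2 := (Real.sq_sqrt (by positivity)).symm
  have second_moment := expect_norm_signs_sq 𝕜 s u
  have fourth_moment := expect_norm_signs_pow_four_le 𝕜 s u
  rw [sum_eq] at second_moment fourth_moment
  have pointwise (t : ℝ) (ht : 0 ≤ t) : 12 * σ ^ 2 * t ^ 2 ≤ 16 * σ ^ 3 * t + t ^ 4 := by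
    have : 0 ≤ t * (t - 2 * σ) ^ 2 * (t + 4 * σ) := by positivity
    linarith
  have averaged : 12 * σ ^ 2 * 𝔼 ε : ι → ℤˣ, ‖∑ k ∈ s, ε k • u k‖ ^ 2 ≤
      16 * σ ^ 3 * 𝔼 ε : ι → ℤˣ, ‖∑ k ∈ s, ε k • u k‖ +
        𝔼 ε : ι → ℤˣ, ‖∑ k ∈ s, ε k • u k‖ ^ 4 := by
    rw [Finset.mul_expect, Finset.mul_expect, ← Finset.expect_add_distrib]
    exact Finset.expect_le_expect fun ε _ => pointwise _ (norm_nonneg _)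
  have first_moment_nonneg : 0 ≤ 𝔼 ε : ι → ℤˣ, ‖∑ k ∈ s, ε k • u k‖ :=
    Finset.expect_nonneg fun _ _ => norm_nonneg _
  rcases (show 0 ≤ σ from Real.sqrt_nonneg _).eq_or_lt with hσ | hσ
  · linarith
  · have : σ ^ 3 * (9 * σ) ≤ σ ^ 3 * (16 * 𝔼 ε : ι → ℤˣ, ‖∑ k ∈ s, ε k • u k‖) := by
      rw [second_moment] at averaged
      linarith
    linarith [le_of_mul_le_mul_left this (by positivity)]

-- The square function is compared with one random vector `∑ k, ε k • u k`, to which `hC` applies.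
omit [DecidableEq ι] in
theorem sum_sqrt_sum_norm_inner_sq_le {α : Type*} {s : Finset α} {x : α → X} {C : ℝ}
    (hC : ∀ y : X, ∑ i ∈ s, ‖inner 𝕜 (x i) y‖ ≤ C * ‖y‖) (hC₀ : 0 ≤ C) (u : ι → X) :
    ∑ i ∈ s, √(∑ k, ‖inner 𝕜 (x i) (u k)‖ ^ 2) ≤ 2 * C * √(∑ k, ‖u k‖ ^ 2) := by
  classical
  have inner_signs (i : α) (ε : ι → ℤˣ) :
      ∑ k, ε k • inner 𝕜 (x i) (u k) = inner 𝕜 (x i) (∑ k, ε k • u k) := by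
    simp only [inner_sum, Units.smul_def, ← Int.cast_smul_eq_zsmul 𝕜, inner_smul_right, smul_eq_mul]
  calc ∑ i ∈ s, √(∑ k, ‖inner 𝕜 (x i) (u k)‖ ^ 2)
    _ ≤ ∑ i ∈ s, 2 * 𝔼 ε : ι → ℤˣ, ‖inner 𝕜 (x i) (∑ k, ε k • u k)‖ :=
        Finset.sum_le_sum fun i _ => by
          simpa only [inner_signs] using
            khintchine_inequality 𝕜 Finset.univ fun k => inner 𝕜 (x i) (u k)
    _ = 2 * 𝔼 ε : ι → ℤˣ, ∑ i ∈ s, ‖inner 𝕜 (x i) (∑ k, ε k • u k)‖ := by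
        rw [← Finset.mul_sum, Finset.expect_sum_comm]
    _ ≤ 2 * 𝔼 ε : ι → ℤˣ, C * ‖∑ k, ε k • u k‖ := by
        gcongr with ε
        exact hC _
    _ ≤ 2 * (C * √(∑ k, ‖u k‖ ^ 2)) := by
        rw [← Finset.mul_expect]
        gcongr
        exact expect_norm_signs_le 𝕜 _ u
    _ = 2 * C * √(∑ k, ‖u k‖ ^ 2) := by ring

end RandomSigns

namespace HilbertTensor

theorem norm_tmul (tp : HilbertTensor H K E) (f : H) (g : K) :
    ‖tp.tmul f g‖ = ‖f‖ * ‖g‖ := by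
  have hsq : ‖tp.tmul f g‖ ^ 2 = (‖f‖ * ‖g‖) ^ 2 := by
    have h := tp.inner_tmul f f g g
    simp only [inner_self_eq_norm_sq_to_K] at h
    rw [mul_pow]
    exact_mod_cast h
  exact (pow_left_inj₀ (norm_nonneg _) (by positivity) two_ne_zero).1 hsq

theorem ext_inner_tmul (tp : HilbertTensor H K E) {x y : E}
    (h : ∀ f g, ⟪tp.tmul f g, x⟫ = ⟪tp.tmul f g, y⟫) : x = y := by
  refine tp.dense_span.eq_of_inner_right (𝕜 := ℂ) fun z hz => ?_
  induction hz using Submodule.span_induction with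
  | mem z hz => obtain ⟨p, rfl⟩ := hz; exact h _ _
  | zero => simp only [inner_zero_left]
  | add a b _ _ ha hb => rw [inner_add_left, inner_add_left, ha, hb]
  | smul c a _ ha => rw [inner_smul_left, inner_smul_left, ha]

/-- The tensor product map `(f, g) ↦ f ⊗ g` as a bounded bilinear map. Bilinearity is not part of
the structure `HilbertTensor`: it is forced by the inner products of elementary tensors. -/
def tmulL (tp : HilbertTensor H K E) : H →L[ℂ] K →L[ℂ] E :=
  LinearMap.mkContinuous₂
    (LinearMap.mk₂ ℂ tp.tmul
      (fun _ _ _ => tp.ext_inner_tmul fun _ _ => by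
        simp only [inner_add_right, inner_tmul]; ring)
      (fun _ _ _ => tp.ext_inner_tmul fun _ _ => by
        simp only [inner_smul_right, inner_tmul]; ring)
      (fun _ _ _ => tp.ext_inner_tmul fun _ _ => by
        simp only [inner_add_right, inner_tmul]; ring)
      (fun _ _ _ => tp.ext_inner_tmul fun _ _ => by
        simp only [inner_smul_right, inner_tmul]; ring))
    1 fun f g => by rw [one_mul]; exact (tp.norm_tmul f g).le

theorem tmulL_apply (tp : HilbertTensor H K E) (f : H) (g : K) :
    tp.tmulL f g = tp.tmul f g := rfl

theorem norm_sum_tmul_orthonormal {n : Type*} [Fintype n] (tp : HilbertTensor H K E) {b : n → K}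
    (hb : Orthonormal ℂ b) (u : n → H) :
    ‖∑ k, tp.tmul (u k) (b k)‖ = √(∑ k, ‖u k‖ ^ 2) := by
  classical
  have inner_eq : ⟪∑ k, tp.tmul (u k) (b k), ∑ k, tp.tmul (u k) (b k)⟫ = ∑ k, ⟪u k, u k⟫ := by
    simp only [sum_inner, inner_sum, inner_tmul, orthonormal_iff_ite.1 hb, mul_ite, mul_one,
      mul_zero, Finset.sum_ite_eq', Finset.mem_univ, if_true]
  simp only [inner_self_eq_norm_sq_to_K] at inner_eq
  rw [← Real.sqrt_sq (norm_nonneg (∑ k, tp.tmul (u k) (b k)))]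
  congr 1
  exact_mod_cast inner_eq

theorem exists_sum_tmul_eq_sum_orthonormal {ι : Type*} (tp : HilbertTensor H K E) (s : Finset ι)
    (x : ι → H) (z : ι → K) :
    ∃ (n : ℕ) (u : Fin n → H) (b : Fin n → K), Orthonormal ℂ b ∧
      ∑ i ∈ s, tp.tmul (x i) (z i) = ∑ k, tp.tmul (u k) (b k) := by
  classical
  let Z : Submodule ℂ K := Submodule.span ℂ (s.image z : Set K)
  have mem_Z : ∀ i ∈ s, z i ∈ Z := fun i hi =>
    Submodule.subset_span (Finset.mem_coe.2 (Finset.mem_image_of_mem z hi))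
  let b := stdOrthonormalBasis ℂ Z
  have expansion : ∀ i ∈ s, z i = ∑ k, ⟪(b k : K), z i⟫ • (b k : K) := fun i hi => by
    simpa using (congrArg Subtype.val (b.sum_repr' ⟨z i, mem_Z i hi⟩)).symm
  refine ⟨_, fun k => ∑ i ∈ s, ⟪(b k : K), z i⟫ • x i, fun k => b k,
    b.orthonormal.comp_linearIsometry Z.subtypeₗᵢ, ?_⟩
  calc ∑ i ∈ s, tp.tmul (x i) (z i)
    _ = ∑ i ∈ s, ∑ k, ⟪(b k : K), z i⟫ • tp.tmulL (x i) (b k) :=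
        Finset.sum_congr rfl fun i hi => by
          conv_lhs => rw [expansion i hi]
          simp only [← tmulL_apply, map_sum, map_smul]
    _ = ∑ k, tp.tmul (∑ i ∈ s, ⟪(b k : K), z i⟫ • x i) (b k) := by
        rw [Finset.sum_comm]
        simp only [← tmulL_apply, map_sum, map_smul, sum_apply, smul_apply]

theorem norm_inner_tmul_sum_orthonormal_le {n : Type*} [Fintype n] (tp : HilbertTensor H K E)
    {b : n → K} (hb : Orthonormal ℂ b) (u : n → H) (x : H) (z : K) :
    ‖⟪tp.tmul x z, ∑ k, tp.tmul (u k) (b k)⟫‖ ≤ √(∑ k, ‖⟪x, u k⟫‖ ^ 2) * ‖z‖ := by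
  have bessel : √(∑ k, ‖⟪z, b k⟫‖ ^ 2) ≤ ‖z‖ := by
    simp only [norm_inner_symm z]
    exact Real.sqrt_le_iff.2 ⟨norm_nonneg _, hb.sum_inner_products_le z⟩
  calc ‖⟪tp.tmul x z, ∑ k, tp.tmul (u k) (b k)⟫‖
    _ ≤ ∑ k, ‖⟪x, u k⟫‖ * ‖⟪z, b k⟫‖ := by
        simp only [inner_sum, inner_tmul, ← norm_mul]
        exact norm_sum_le _ _
    _ ≤ √(∑ k, ‖⟪x, u k⟫‖ ^ 2) * √(∑ k, ‖⟪z, b k⟫‖ ^ 2) := Real.sum_mul_le_sqrt_mul_sqrt _ _ _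
    _ ≤ √(∑ k, ‖⟪x, u k⟫‖ ^ 2) * ‖z‖ := by gcongr

/-- The little Grothendieck inequality for Hilbert spaces, in tensor form. -/
theorem norm_sum_tmul_le {ι : Type*} (tp : HilbertTensor H K E) {s : Finset ι} {x : ι → H}
    {z : ι → K} {C M : ℝ} (hC : ∀ y : H, ∑ i ∈ s, ‖⟪x i, y⟫‖ ≤ C * ‖y‖) (hC₀ : 0 ≤ C)
    (hz : ∀ i ∈ s, ‖z i‖ ≤ M) (hM₀ : 0 ≤ M) :
    ‖∑ i ∈ s, tp.tmul (x i) (z i)‖ ≤ 2 * C * M := by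
  obtain ⟨n, u, b, hb, hub⟩ := tp.exists_sum_tmul_eq_sum_orthonormal s x z
  set q := ‖∑ i ∈ s, tp.tmul (x i) (z i)‖
  have norm_u : √(∑ k, ‖u k‖ ^ 2) = q := by rw [← tp.norm_sum_tmul_orthonormal hb, ← hub]
  have hq : q * q ≤ 2 * C * M * q := calc
    q * q = ‖∑ i ∈ s, ⟪tp.tmul (x i) (z i), ∑ k, tp.tmul (u k) (b k)⟫‖ := by
        rw [← sum_inner, ← hub, inner_self_eq_norm_sq_to_K, norm_pow, RCLike.norm_ofReal,
          abs_norm, sq]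
    _ ≤ ∑ i ∈ s, √(∑ k, ‖⟪x i, u k⟫‖ ^ 2) * M := by
        refine (norm_sum_le _ _).trans (Finset.sum_le_sum fun i hi => ?_)
        refine (tp.norm_inner_tmul_sum_orthonormal_le hb u _ _).trans ?_
        gcongr
        exact hz i hi
    _ ≤ 2 * C * q * M := by
        rw [← Finset.sum_mul, ← norm_u]
        gcongr
        exact sum_sqrt_sum_norm_inner_sq_le ℂ hC hC₀ u
    _ = 2 * C * M * q := by ring
  rcases (show 0 ≤ q from norm_nonneg _).eq_or_lt with h | h
  · rw [← h]
    positivity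
  · exact le_of_mul_le_mul_right hq h

theorem sum_tmul_eq_sum_fiber {ι κ : Type*} [DecidableEq ι] [DecidableEq κ]
    (tp : HilbertTensor H K E) (x : ι → H) (y : κ → K) (F : Finset (ι × κ)) :
    ∑ p ∈ F, tp.tmul (x p.1) (y p.2) = ∑ i ∈ F.image Prod.fst,
      tp.tmul (x i) (∑ j ∈ F.image Prod.snd with (i, j) ∈ F, y j) := by
  simp only [← tmulL_apply, map_sum]
  refine Finset.sum_finset_product' F _ _ (f := fun i j => tp.tmulL (x i) (y j)) fun p => ?_
  simp only [Finset.mem_image, Finset.mem_filter]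
  exact ⟨fun hp => ⟨⟨p, hp, rfl⟩, ⟨p, hp, rfl⟩, hp⟩, fun hp => hp.2.2⟩

theorem norm_sum_prod_tmul_le {ι κ : Type*} [DecidableEq ι] [DecidableEq κ]
    (tp : HilbertTensor H K E) {x : ι → H} {y : κ → K} {F : Finset (ι × κ)} {A B : ℝ}
    (hx : ∀ s ⊆ F.image Prod.fst, ‖∑ i ∈ s, x i‖ ≤ A)
    (hy : ∀ t ⊆ F.image Prod.snd, ‖∑ j ∈ t, y j‖ ≤ B) :
    ‖∑ p ∈ F, tp.tmul (x p.1) (y p.2)‖ ≤ 8 * (A * B) := by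
  have hA : 0 ≤ A := (norm_nonneg _).trans (hx ∅ (Finset.empty_subset _))
  have hB : 0 ≤ B := (norm_nonneg _).trans (hy ∅ (Finset.empty_subset _))
  rw [sum_tmul_eq_sum_fiber]
  calc _ ≤ 2 * (4 * A) * B := tp.norm_sum_tmul_le (sum_norm_inner_le hx) (by positivity)
        (fun i _ => hy _ (Finset.filter_subset _ _)) hB
    _ = 8 * (A * B) := by ring

theorem summable_tmul {ι κ : Type*} [CompleteSpace E] (tp : HilbertTensor H K E) {x : ι → H}
    {y : κ → K} (hx : Summable x) (hy : Summable y) :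
    Summable fun p : ι × κ => tp.tmul (x p.1) (y p.2) := by
  classical
  rw [summable_iff_vanishing_norm]
  intro ε hε
  obtain ⟨A, hA, bound_x⟩ := exists_norm_sum_le_of_summable hx
  obtain ⟨B, hB, bound_y⟩ := exists_norm_sum_le_of_summable hy
  obtain ⟨I, tail_x⟩ := cauchySeq_finset_iff_vanishing_norm.1 hx.hasSum.cauchySeq
    (ε / (32 * B)) (by positivity)
  obtain ⟨J, tail_y⟩ := cauchySeq_finset_iff_vanishing_norm.1 hy.hasSum.cauchySeq
    (ε / (32 * A)) (by positivity)
  refine ⟨I ×ˢ J, fun F hF => ?_⟩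
  have inside : ‖∑ p ∈ F with p.1 ∈ I, tp.tmul (x p.1) (y p.2)‖ ≤ 8 * (A * (ε / (32 * A))) := by
    refine tp.norm_sum_prod_tmul_le (fun s _ => bound_x s) fun t ht => (tail_y t ?_).le
    rw [Finset.disjoint_left] at hF ⊢
    intro j hj
    obtain ⟨p, hp, rfl⟩ := Finset.mem_image.1 (ht hj)
    obtain ⟨hpF, hpI⟩ := Finset.mem_filter.1 hp
    exact fun hpJ => hF hpF (Finset.mem_product.2 ⟨hpI, hpJ⟩)
  have outside : ‖∑ p ∈ F with p.1 ∉ I, tp.tmul (x p.1) (y p.2)‖ ≤ 8 * (ε / (32 * B) * B) := by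
    refine tp.norm_sum_prod_tmul_le (fun s hs => (tail_x s ?_).le) fun t _ => bound_y t
    rw [Finset.disjoint_left]
    intro i hi
    obtain ⟨p, hp, rfl⟩ := Finset.mem_image.1 (hs hi)
    exact (Finset.mem_filter.1 hp).2
  rw [← Finset.sum_filter_add_sum_filter_not F (fun p => p.1 ∈ I)]
  calc _ ≤ 8 * (A * (ε / (32 * A))) + 8 * (ε / (32 * B) * B) :=
        (norm_add_le _ _).trans (add_le_add inside outside)
    _ = ε / 2 := by
        field_simp
        norm_num
    _ < ε := half_lt_self hε

theorem summable_tmul_right_iff {κ : Type*} [CompleteSpace K] [CompleteSpace E]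
    (tp : HilbertTensor H K E) {f : H} (hf : f ≠ 0) {y : κ → K} :
    Summable (fun j => tp.tmul f (y j)) ↔ Summable y := by
  refine Summable.map_iff_of_leftInverse (tp.tmulL f) (⟪f, f⟫⁻¹ • adjoint (tp.tmulL f))
    (tp.tmulL f).continuous (ContinuousLinearMap.continuous _) fun g => ?_
  refine ext_inner_left ℂ fun k => ?_
  rw [smul_apply, inner_smul_right, adjoint_inner_right, tmulL_apply, tmulL_apply, inner_tmul,
    inv_mul_cancel_left₀ (inner_self_ne_zero.2 hf)]

/-- The tensor product with its two factors interchanged, which transfers statements about one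
factor to the other. -/
def swap (tp : HilbertTensor H K E) : HilbertTensor K H E where
  tmul g f := tp.tmul f g
  inner_tmul g g' f f' := by rw [tp.inner_tmul, mul_comm]
  dense_span := by
    convert! tp.dense_span using 3
    exact (Equiv.prodComm K H).surjective.range_comp fun p : H × K => tp.tmul p.1 p.2

theorem summable_tmul_left_iff {ι : Type*} [CompleteSpace H] [CompleteSpace E]
    (tp : HilbertTensor H K E) {g : K} (hg : g ≠ 0) {x : ι → H} :
    Summable (fun i => tp.tmul (x i) g) ↔ Summable x :=
  tp.swap.summable_tmul_right_iff hg

theorem summable_tmul_iff {ι κ : Type*} [CompleteSpace H] [CompleteSpace K] [CompleteSpace E]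
    (tp : HilbertTensor H K E) {x : ι → H} {y : κ → K} (hx : x ≠ 0) (hy : y ≠ 0) :
    Summable (fun p : ι × κ => tp.tmul (x p.1) (y p.2)) ↔ Summable x ∧ Summable y := by
  obtain ⟨i, hi⟩ := Function.ne_iff.1 hx
  obtain ⟨j, hj⟩ := Function.ne_iff.1 hy
  refine ⟨fun h => ⟨?_, ?_⟩, fun h => tp.summable_tmul h.1 h.2⟩
  · exact (tp.summable_tmul_left_iff hj).1 (h.comp_injective (Prod.mk_left_injective j))
  · exact (tp.summable_tmul_right_iff hi).1 (h.comp_injective (Prod.mk_right_injective i))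

-- If one of the two series diverges, both sides are `0`: unless the other family vanishes, the
-- double series diverges as well.
theorem tsum_tmul {ι κ : Type*} [CompleteSpace H] [CompleteSpace K] [CompleteSpace E]
    (tp : HilbertTensor H K E) (x : ι → H) (y : κ → K) :
    ∑' p : ι × κ, tp.tmul (x p.1) (y p.2) = tp.tmul (∑' i, x i) (∑' j, y j) := by
  have zero_tmul (g : K) : tp.tmul 0 g = 0 := map_zero (tp.tmulL.flip g)
  have tmul_zero (f : H) : tp.tmul f 0 = 0 := map_zero (tp.tmulL f)
  rcases eq_or_ne x 0 with rfl | hx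
  · simp only [Pi.zero_apply, zero_tmul, tsum_zero]
  rcases eq_or_ne y 0 with rfl | hy
  · simp only [Pi.zero_apply, tmul_zero, tsum_zero]
  by_cases hxy : Summable x ∧ Summable y
  · calc ∑' p : ι × κ, tp.tmul (x p.1) (y p.2)
      _ = ∑' i, ∑' j, tp.tmulL (x i) (y j) := (tp.summable_tmul hxy.1 hxy.2).tsum_prod
      _ = ∑' i, tp.tmulL.flip (∑' j, y j) (x i) :=
          tsum_congr fun i => ((tp.tmulL (x i)).map_tsum hxy.2).symm
      _ = tp.tmul (∑' i, x i) (∑' j, y j) := ((tp.tmulL.flip _).map_tsum hxy.1).symm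
  · rw [tsum_eq_zero_of_not_summable fun h => hxy ((tp.summable_tmul_iff hx hy).1 h)]
    rcases not_and_or.1 hxy with hx | hy
    · rw [tsum_eq_zero_of_not_summable hx, zero_tmul]
    · rw [tsum_eq_zero_of_not_summable hy, tmul_zero]

end HilbertTensor

namespace IsTensorOp

section Algebra

variable {H'' K'' E'' : Type*}
variable [NormedAddCommGroup H''] [InnerProductSpace ℂ H'']
variable [NormedAddCommGroup K''] [InnerProductSpace ℂ K'']
variable [NormedAddCommGroup E''] [InnerProductSpace ℂ E'']
variable {tp : HilbertTensor H K E} {tp' : HilbertTensor H' K' E'}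
variable {tp'' : HilbertTensor H'' K'' E''}
variable {Q : H →L[ℂ] H'} {T : K →L[ℂ] K'} {R : E →L[ℂ] E'}

theorem comp {Q' : H' →L[ℂ] H''} {T' : K' →L[ℂ] K''} {R' : E' →L[ℂ] E''}
    (h' : IsTensorOp tp' tp'' Q' T' R') (h : IsTensorOp tp tp' Q T R) :
    IsTensorOp tp tp'' (Q' ∘L Q) (T' ∘L T) (R' ∘L R) := fun f g => by
  simp only [comp_apply, h f g, h' (Q f) (T g)]

theorem smul (h : IsTensorOp tp tp' Q T R) (a b : ℝ) :
    IsTensorOp tp tp' (a • Q) (b • T) ((a * b) • R) := fun f g => by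
  simp only [smul_apply, h f g, ← tp'.tmulL_apply, map_smul_of_tower, mul_smul]

theorem adjoint [CompleteSpace H] [CompleteSpace K] [CompleteSpace E]
    [CompleteSpace H'] [CompleteSpace K'] [CompleteSpace E'] (h : IsTensorOp tp tp' Q T R) :
    IsTensorOp tp' tp (adjoint Q) (adjoint T) (adjoint R) := fun a b =>
  tp.ext_inner_tmul fun f g => by
    simp only [adjoint_inner_right, h f g, HilbertTensor.inner_tmul]

theorem of_eq_tsum {ι κ : Type*} [CompleteSpace H'] [CompleteSpace K'] [CompleteSpace E']
    {Qi : ι → H →L[ℂ] H'} {Tj : κ → K →L[ℂ] K'} {Rij : ι × κ → E →L[ℂ] E'}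
    (h : ∀ i j, IsTensorOp tp tp' (Qi i) (Tj j) (Rij (i, j))) (hQ : ∀ f, Q f = ∑' i, Qi i f)
    (hT : ∀ g, T g = ∑' j, Tj j g) (hR : ∀ x, R x = ∑' p, Rij p x) :
    IsTensorOp tp tp' Q T R := fun f g => by
  rw [hR, hQ, hT, ← tp'.tsum_tmul]
  exact tsum_congr fun p => h p.1 p.2 f g

end Algebra

end IsTensorOp

theorem isTensorOp_projL (tp : HilbertTensor H K E) (V : Submodule ℂ H) (W : Submodule ℂ K)
    [HasOrthogonalProjection V] [HasOrthogonalProjection W]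
    [HasOrthogonalProjection (tsub tp V W)] :
    IsTensorOp tp tp (projL V) (projL W) (projL (tsub tp V W)) := by
  intro f g
  change (tsub tp V W).starProjection _ = tp.tmul (V.starProjection f) (W.starProjection g)
  refine eq_starProjection_of_mem_orthogonal ?mem ?orthogonal
  case mem =>
    exact Submodule.le_topologicalClosure _ (Submodule.subset_span
      ⟨_, V.starProjection_apply_mem f, _, W.starProjection_apply_mem g, rfl⟩)
  case orthogonal =>
    rw [tsub, Submodule.orthogonal_closure, ← Submodule.span_singleton_le_iff_mem,
      ← Submodule.isOrtho_iff_le, Submodule.isOrtho_span]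
    rintro _ rfl _ ⟨a, ha, b, hb, rfl⟩
    have inner_V : ⟪V.starProjection f, a⟫ = ⟪f, a⟫ := by
      rw [V.inner_starProjection_left_eq_right, V.starProjection_eq_self_iff.2 ha]
    have inner_W : ⟪W.starProjection g, b⟫ = ⟪g, b⟫ := by
      rw [W.inner_starProjection_left_eq_right, W.starProjection_eq_self_iff.2 hb]
    rw [inner_sub_left, HilbertTensor.inner_tmul, HilbertTensor.inner_tmul, inner_V, inner_W,
      sub_self]

theorem stmt_17_general {ι κ : Type*} [CompleteSpace H] [CompleteSpace K] [CompleteSpace E]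
    {Hi : ι → Type*} [∀ i, NormedAddCommGroup (Hi i)] [∀ i, InnerProductSpace ℂ (Hi i)]
    [∀ i, CompleteSpace (Hi i)]
    {Kj : κ → Type*} [∀ j, NormedAddCommGroup (Kj j)] [∀ j, InnerProductSpace ℂ (Kj j)]
    [∀ j, CompleteSpace (Kj j)]
    {Eij : ι → κ → Type*} [∀ i j, NormedAddCommGroup (Eij i j)]
    [∀ i j, InnerProductSpace ℂ (Eij i j)] [∀ i j, CompleteSpace (Eij i j)]
    (tp : HilbertTensor H K E) (tpij : ∀ i j, HilbertTensor (Hi i) (Kj j) (Eij i j))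
    (V V' : ι → Submodule ℂ H) [∀ i, HasOrthogonalProjection (V i)]
    [∀ i, HasOrthogonalProjection (V' i)]
    (W W' : κ → Submodule ℂ K) [∀ j, HasOrthogonalProjection (W j)]
    [∀ j, HasOrthogonalProjection (W' j)]
    [∀ i j, HasOrthogonalProjection (tsub tp (V i) (W j))]
    [∀ i j, HasOrthogonalProjection (tsub tp (V' i) (W' j))]
    (Λ Λ' : ∀ i, H →L[ℂ] Hi i) (Γ Γ' : ∀ j, K →L[ℂ] Kj j)
    (v v' : ι → ℝ) (w w' : κ → ℝ)
    (Rij R'ij : ∀ i j, E →L[ℂ] Eij i j)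
    (hRij : ∀ i j, IsTensorOp tp (tpij i j) (Λ i) (Γ j) (Rij i j))
    (hR'ij : ∀ i j, IsTensorOp tp (tpij i j) (Λ' i) (Γ' j) (R'ij i j))
    (SΛΛ' : H →L[ℂ] H) (SΓΓ' : K →L[ℂ] K) (S : E →L[ℂ] E)
    (hSΛΛ' : ∀ f : H, SΛΛ' f = ∑' i, (v i * v' i) •
      projL (V i) (ContinuousLinearMap.adjoint (Λ i) (Λ' i (projL (V' i) f))))
    (hSΓΓ' : ∀ g : K, SΓΓ' g = ∑' j, (w j * w' j) •
      projL (W j) (ContinuousLinearMap.adjoint (Γ j) (Γ' j (projL (W' j) g))))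
    (hSdef : ∀ x : E, S x = ∑' p : ι × κ, (v p.1 * w p.2 * (v' p.1 * w' p.2)) •
      projL (tsub tp (V p.1) (W p.2))
        (ContinuousLinearMap.adjoint (Rij p.1 p.2)
          (R'ij p.1 p.2 (projL (tsub tp (V' p.1) (W' p.2)) x)))) :
    IsTensorOp tp tp SΛΛ' SΓΓ' S := by
  refine IsTensorOp.of_eq_tsum
    (Qi := fun i => (v i * v' i) • (projL (V i) ∘L adjoint (Λ i) ∘L Λ' i ∘L projL (V' i)))
    (Tj := fun j => (w j * w' j) • (projL (W j) ∘L adjoint (Γ j) ∘L Γ' j ∘L projL (W' j)))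
    (Rij := fun p => (v p.1 * w p.2 * (v' p.1 * w' p.2)) •
      (projL (tsub tp (V p.1) (W p.2)) ∘L adjoint (Rij p.1 p.2) ∘L R'ij p.1 p.2 ∘L
        projL (tsub tp (V' p.1) (W' p.2)))) (fun i j => ?_) hSΛΛ' hSΓΓ' hSdef
  rw [mul_mul_mul_comm]
  exact ((isTensorOp_projL tp (V i) (W j)).comp <| (hRij i j).adjoint.comp <|
    (hR'ij i j).comp <| isTensorOp_projL tp (V' i) (W' j)).smul _ _

/-- the frame operator of the pair of tensor product g-fusion Bessel
sequences satisfies `S = S_{ΛΛ'} ⊗ S_{ΓΓ'}`. -/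
theorem stmt_17 {ι κ : Type*} [CompleteSpace H] [CompleteSpace K] [CompleteSpace E]
    {Hi : ι → Type*} [∀ i, NormedAddCommGroup (Hi i)] [∀ i, InnerProductSpace ℂ (Hi i)]
    [∀ i, CompleteSpace (Hi i)]
    {Kj : κ → Type*} [∀ j, NormedAddCommGroup (Kj j)] [∀ j, InnerProductSpace ℂ (Kj j)]
    [∀ j, CompleteSpace (Kj j)]
    {Eij : ι → κ → Type*} [∀ i j, NormedAddCommGroup (Eij i j)]
    [∀ i j, InnerProductSpace ℂ (Eij i j)] [∀ i j, CompleteSpace (Eij i j)]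
    (tp : HilbertTensor H K E) (tpij : ∀ i j, HilbertTensor (Hi i) (Kj j) (Eij i j))
    (V V' : ι → Submodule ℂ H) [∀ i, HasOrthogonalProjection (V i)]
    [∀ i, HasOrthogonalProjection (V' i)]
    (W W' : κ → Submodule ℂ K) [∀ j, HasOrthogonalProjection (W j)]
    [∀ j, HasOrthogonalProjection (W' j)]
    [∀ i j, HasOrthogonalProjection (tsub tp (V i) (W j))]
    [∀ i j, HasOrthogonalProjection (tsub tp (V' i) (W' j))]
    (Λ Λ' : ∀ i, H →L[ℂ] Hi i) (Γ Γ' : ∀ j, K →L[ℂ] Kj j)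
    (v v' : ι → ℝ) (w w' : κ → ℝ) (B₀ D₀ E₀ F₀ : ℝ)
    (hΛ : IsGFusionBessel V Λ v B₀) (hΛ' : IsGFusionBessel V' Λ' v' D₀)
    (hΓ : IsGFusionBessel W Γ w E₀) (hΓ' : IsGFusionBessel W' Γ' w' F₀)
    (Rij R'ij : ∀ i j, E →L[ℂ] Eij i j)
    (hRij : ∀ i j, IsTensorOp tp (tpij i j) (Λ i) (Γ j) (Rij i j))
    (hR'ij : ∀ i j, IsTensorOp tp (tpij i j) (Λ' i) (Γ' j) (R'ij i j))
    (SΛΛ' : H →L[ℂ] H) (SΓΓ' : K →L[ℂ] K) (S : E →L[ℂ] E)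
    (hSΛΛ' : ∀ f : H, SΛΛ' f = ∑' i, (v i * v' i) •
      projL (V i) (ContinuousLinearMap.adjoint (Λ i) (Λ' i (projL (V' i) f))))
    (hSΓΓ' : ∀ g : K, SΓΓ' g = ∑' j, (w j * w' j) •
      projL (W j) (ContinuousLinearMap.adjoint (Γ j) (Γ' j (projL (W' j) g))))
    (hSdef : ∀ x : E, S x = ∑' p : ι × κ, (v p.1 * w p.2 * (v' p.1 * w' p.2)) •
      projL (tsub tp (V p.1) (W p.2))
        (ContinuousLinearMap.adjoint (Rij p.1 p.2)
          (R'ij p.1 p.2 (projL (tsub tp (V' p.1) (W' p.2)) x)))) :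
    IsTensorOp tp tp SΛΛ' SΓΓ' S :=
  stmt_17_general tp tpij V V' W W' Λ Λ' Γ Γ' v v' w w' Rij R'ij hRij hR'ij SΛΛ' SΓΓ' S
    hSΛΛ' hSΓΓ' hSdef
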